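/- arXiv:math-ph/0606010 — 2 statements merged into one kernel-verified Lean document; each statement's English description precedes it below -/
import Mathlib

section
/- Let ν ≥ 2 be an integer, c_ν = 2ν·C(2ν−1, ν−1), η = (ν−1)²/(4ν(ν+1)), r = 3(ν+1)/(ν−1). Let I ⊆ ℝ be an open interval and z : ℝ → ℝ differentiable and strictly positive on I with 1 = z(t) + c_ν·t·z(t)^ν for all t ∈ I. Then the function e₀(t) = η·(z(t)−1)·(z(t)−r) + (1/2)·log z(t) is differentiable on I with derivative e₀'(t) = (1/(ν+1))·C(2ν−1, ν−1)·z(t)^ν·( (ν−1)·z(t) − (ν+1) ); in particular the t-derivative of e₀ is a polynomial expression in z(t). -/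
/-! Differentiating the constraint `1 = z + c t z^ν` and using it once more to eliminate `t` gives
`((ν - 1) z - ν) z' = c z^(ν+1)`. On the other hand
`e₀' = z' · ((ν - 1) z - ν) ((ν - 1) z - (ν + 1)) / (2 ν (ν + 1) z)`: the constants `η` and `r` are
such that the quadratic factors. The first factor absorbs `z'`, so no division by `(ν - 1) z - ν`
is needed, and a polynomial in `z` remains. -/

/-- For `V = λ²/2 + t·λ^{2ν}`, with `z` the (positive) solution of the endpoint
constraint `1 = z + c_ν·t·z^ν`, the leading coefficient
`e₀(t) = η·(z−1)·(z−r) + (1/2)·log z` has derivative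
`e₀'(t) = (1/(ν+1))·C(2ν−1,ν−1)·z^ν·((ν−1)·z − (ν+1))`, a polynomial expression in `z(t)`. -/
theorem stmt_7 (ν : ℕ) (hν : 2 ≤ ν)
    (cν η r : ℝ)
    (hc : cν = 2 * ν * (Nat.choose (2 * ν - 1) (ν - 1) : ℝ))
    (hη : η = ((ν : ℝ) - 1) ^ 2 / (4 * ν * (ν + 1)))
    (hr : r = 3 * ((ν : ℝ) + 1) / ((ν : ℝ) - 1))
    (a b : ℝ) (z : ℝ → ℝ)
    (hdiff : ∀ t ∈ Set.Ioo a b, DifferentiableAt ℝ z t)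
    (hpos : ∀ t ∈ Set.Ioo a b, 0 < z t)
    (halg : ∀ t ∈ Set.Ioo a b, 1 = z t + cν * t * z t ^ ν) :
    ∀ t ∈ Set.Ioo a b,
      HasDerivAt (fun t => η * (z t - 1) * (z t - r) + (1 / 2) * Real.log (z t))
        ((1 / ((ν : ℝ) + 1)) * (Nat.choose (2 * ν - 1) (ν - 1) : ℝ) * z t ^ ν *
          (((ν : ℝ) - 1) * z t - ((ν : ℝ) + 1))) t := by
  intro t ht
  have hz := hpos t ht
  have hd := (hdiff t ht).hasDerivAt
  set w := deriv z t with hw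
  -- The constraint function is constant near `t`, so its derivative vanishes.
  have hG : HasDerivAt (fun s => z s + cν * s * z s ^ ν)
      (w + (cν * 1 * z t ^ ν + cν * t * (ν * z t ^ (ν - 1) * w))) t :=
    hd.add (((hasDerivAt_id t).const_mul cν).mul (hd.pow ν))
  have hG0 : HasDerivAt (fun s => z s + cν * s * z s ^ ν) 0 t := by
    refine (hasDerivAt_const t (1 : ℝ)).congr_of_eventuallyEq ?_
    filter_upwards [Ioo_mem_nhds ht.1 ht.2] with s hs
    exact (halg s hs).symm
  have h0 := hG.unique hG0
  have hpow : z t ^ ν = z t ^ (ν - 1) * z t := by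
    rw [← pow_succ, Nat.sub_add_cancel (by omega)]
  have hkey : (((ν : ℝ) - 1) * z t - ν) * w = cν * z t ^ ν * z t := by
    have h1 := halg t ht
    rw [hpow] at h0 h1 ⊢
    linear_combination (-z t) * h0 - ν * w * h1
  have hν2 : (2 : ℝ) ≤ ν := by exact_mod_cast hν
  have hν0 : (ν : ℝ) ≠ 0 := by positivity
  have hν1 : (ν : ℝ) - 1 ≠ 0 := by linarith
  have hνp : (ν : ℝ) + 1 ≠ 0 := by positivity
  have hE := (((hd.sub_const 1).const_mul η).mul (hd.sub_const r)).add
    ((hd.log hz.ne').const_mul (1 / 2))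
  refine hE.congr_deriv ?_
  have hfac : η * w * (z t - r) + η * (z t - 1) * w + 1 / 2 * (w / z t)
      = (((ν : ℝ) - 1) * z t - ν) * w * (((ν : ℝ) - 1) * z t - (ν + 1))
        / (2 * ν * (ν + 1) * z t) := by
    rw [hη, hr]
    field_simp
    ring
  rw [hfac, hkey, hc]
  field_simp
end

section
/- Let ν ≥ 2 be an integer, c ∈ ℝ, and let I ⊆ ℝ be an open interval. Suppose z : ℝ → ℝ is infinitely differentiable on I and satisfies 1 = z(s) − c·s·z(s)^ν and ν − (ν−1)·z(s) ≠ 0 for all s ∈ I. Then for every integer j ≥ 1 there exists a polynomial P_j with rational coefficients of degree at most j−1 such that for all s ∈ I the j-th derivative of z satisfies z^{(j)}(s) = c^j · z(s)^{νj+1} · P_j(z(s)) / (ν − (ν−1)·z(s))^{2j−1}. -/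
/-!
Differentiating `1 = z - c s z^ν` and eliminating `c s z^ν = z - 1` gives the autonomous equation
`z' = c z^(ν+1) / D(z)` with `D(z) = ν - (ν-1) z`. Differentiating
`c^j z^(νj+1) P(z) / D(z)^(2j-1)` along this equation gives the same expression for `j + 1`, with
`P` replaced by `((νj+1) P + X P') D + (2j-1)(ν-1) X P`, whose degree exceeds that of `P` by at
most one. The result follows by induction from `P_1 = 1`.
-/

open Polynomial in
/-- The polynomial `P_{k+2}` obtained from `P = P_{k+1}` by one differentiation. -/
noncomputable def nextPoly (ν k : ℕ) (P : ℚ[X]) : ℚ[X] :=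
  (C ((ν : ℚ) * (k + 1) + 1) * P + X * derivative P) * (C (ν : ℚ) - C ((ν : ℚ) - 1) * X)
    + C ((2 * (k : ℚ) + 1) * ((ν : ℚ) - 1)) * (X * P)

open Polynomial in
lemma natDegree_nextPoly_le (ν k : ℕ) (P : ℚ[X]) (hP : P.natDegree ≤ k) :
    (nextPoly ν k P).natDegree ≤ k + 1 := by
  have hXP' : (X * derivative P).natDegree ≤ k := by
    -- `natDegree P - 1` truncates at constants, where the derivative vanishes.
    rcases Nat.eq_zero_or_pos P.natDegree with h | h
    · rw [derivative_of_natDegree_zero h]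
      simp
    · have h1 := natDegree_derivative_le P
      have h2 := natDegree_mul_le (p := (X : ℚ[X])) (q := derivative P)
      rw [natDegree_X] at h2
      omega
  have hsum : (C ((ν : ℚ) * (k + 1) + 1) * P + X * derivative P).natDegree ≤ k :=
    natDegree_add_le_of_degree_le ((natDegree_C_mul_le _ _).trans hP) hXP'
  have hD : (C (ν : ℚ) - C ((ν : ℚ) - 1) * X).natDegree ≤ 1 :=
    (natDegree_sub_le_of_le (natDegree_C _).le
      ((natDegree_C_mul_le _ _).trans natDegree_X_le)).trans (by simp)
  refine natDegree_add_le_of_degree_le (natDegree_mul_le_of_le hsum hD) ?_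
  refine (natDegree_C_mul_le _ _).trans ?_
  have := natDegree_mul_le_of_le (natDegree_X_le (R := ℚ)) hP
  omega

/-- The autonomous first-order equation satisfied by `z`. -/
lemma hasDerivAt_of_constraint (ν : ℕ) (hν : 2 ≤ ν) (c a b : ℝ) (z : ℝ → ℝ)
    (hsmooth : ContDiffOn ℝ (⊤ : ℕ∞) z (Set.Ioo a b))
    (halg : ∀ s ∈ Set.Ioo a b, 1 = z s - c * s * z s ^ ν)
    (hne : ∀ s ∈ Set.Ioo a b, (ν : ℝ) - ((ν : ℝ) - 1) * z s ≠ 0)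
    (s : ℝ) (hs : s ∈ Set.Ioo a b) :
    HasDerivAt z (c * z s ^ (ν + 1) / ((ν : ℝ) - ((ν : ℝ) - 1) * z s)) s := by
  have hnhds : Set.Ioo a b ∈ nhds s := isOpen_Ioo.mem_nhds hs
  have hz : HasDerivAt z (deriv z s) s :=
    ((hsmooth.contDiffAt hnhds).differentiableAt (by simp)).hasDerivAt
  have hF := hz.sub (((hasDerivAt_id s).const_mul c).mul (hz.pow ν))
  have hF0 : HasDerivAt (fun _ : ℝ => (1 : ℝ)) _ s :=
    hF.congr_of_eventuallyEq (Filter.eventually_of_mem hnhds fun t ht => by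
      simpa using halg t ht)
  have h0 := hF0.unique (hasDerivAt_const s (1 : ℝ))
  have key : c * z s ^ (ν + 1) / ((ν : ℝ) - ((ν : ℝ) - 1) * z s) = deriv z s := by
    rw [div_eq_iff (hne s hs)]
    obtain ⟨n, rfl⟩ : ∃ n, ν = n + 1 := ⟨ν - 1, by omega⟩
    have h1 := halg s hs
    simp at h0
    push_cast at h0 h1 ⊢
    linear_combination (-z s) * h0 - deriv z s * (n + 1) * h1
  rw [key]
  exact hz

/-- One differentiation of the claimed closed form, along `z' = c z^(ν+1) / D(z)`. -/
lemma hasDerivAt_closedForm (ν k : ℕ) (c : ℝ) (z : ℝ → ℝ) (P : Polynomial ℚ) (s : ℝ)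
    (hD : (ν : ℝ) - ((ν : ℝ) - 1) * z s ≠ 0)
    (hz : HasDerivAt z (c * z s ^ (ν + 1) / ((ν : ℝ) - ((ν : ℝ) - 1) * z s)) s) :
    HasDerivAt (fun t => c ^ (k + 1) * z t ^ (ν * (k + 1) + 1) * (Polynomial.aeval (z t) P)
        / ((ν : ℝ) - ((ν : ℝ) - 1) * z t) ^ (2 * k + 1))
      (c ^ (k + 2) * z s ^ (ν * (k + 2) + 1) * (Polynomial.aeval (z s) (nextPoly ν k P))
        / ((ν : ℝ) - ((ν : ℝ) - 1) * z s) ^ (2 * k + 3)) s := by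
  have hP : HasDerivAt (fun t => Polynomial.aeval (z t) P) _ s :=
    (P.hasDerivAt_aeval (z s)).comp s hz
  have hden := (((hz.const_mul ((ν : ℝ) - 1)).const_sub (ν : ℝ)).pow (2 * k + 1))
  have h := (((hz.pow (ν * (k + 1) + 1)).const_mul (c ^ (k + 1))).mul hP).div hden
    (pow_ne_zero _ hD)
  refine h.congr_deriv ?_
  simp only [nextPoly, map_add, map_mul, map_sub, Polynomial.aeval_C, Polynomial.aeval_X,
    Pi.pow_apply, Pi.mul_apply, eq_ratCast, Nat.add_sub_cancel]
  push_cast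
  generalize Polynomial.aeval (z s) P = p
  generalize Polynomial.aeval (z s) (Polynomial.derivative P) = p'
  generalize hd : (ν : ℝ) - ((ν : ℝ) - 1) * z s = d at *
  field_simp
  ring

/-- Lemma 5.1 of the paper: if `z` is smooth on an open interval `I`, satisfies
`1 = z(s) − c·s·z(s)^ν` and `ν − (ν−1)·z(s) ≠ 0` on `I`, then every derivative
`z^{(j)}` (`j ≥ 1`) is of the form
`c^j·z^{νj+1}·P_j(z)/(ν−(ν−1)z)^{2j−1}` for a rational polynomial `P_j` of degree ≤ j−1. -/
theorem stmt_8 (ν : ℕ) (hν : 2 ≤ ν) (c : ℝ) (a b : ℝ) (z : ℝ → ℝ)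
    (hsmooth : ContDiffOn ℝ (⊤ : ℕ∞) z (Set.Ioo a b))
    (halg : ∀ s ∈ Set.Ioo a b, 1 = z s - c * s * z s ^ ν)
    (hne : ∀ s ∈ Set.Ioo a b, (ν : ℝ) - ((ν : ℝ) - 1) * z s ≠ 0) :
    ∀ j : ℕ, 1 ≤ j → ∃ P : Polynomial ℚ, P.natDegree ≤ j - 1 ∧
      ∀ s ∈ Set.Ioo a b,
        iteratedDerivWithin j z (Set.Ioo a b) s
          = c ^ j * z s ^ (ν * j + 1) * (Polynomial.aeval (z s) P)
              / ((ν : ℝ) - ((ν : ℝ) - 1) * z s) ^ (2 * j - 1) := by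
  have hz := hasDerivAt_of_constraint ν hν c a b z hsmooth halg hne
  have huniq : ∀ s ∈ Set.Ioo a b, UniqueDiffWithinAt ℝ (Set.Ioo a b) s :=
    fun s hs => isOpen_Ioo.uniqueDiffWithinAt hs
  intro j hj
  induction j, hj using Nat.le_induction with
  | base =>
    refine ⟨1, by simp, fun s hs => ?_⟩
    rw [iteratedDerivWithin_one, (hz s hs).hasDerivWithinAt.derivWithin (huniq s hs)]
    simp
  | succ j hj ih =>
    obtain ⟨k, rfl⟩ : ∃ k, j = k + 1 := ⟨j - 1, by omega⟩
    obtain ⟨P, hdeg, hP⟩ := ih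
    refine ⟨nextPoly ν k P, natDegree_nextPoly_le ν k P hdeg, fun s hs => ?_⟩
    rw [iteratedDerivWithin_succ, derivWithin_congr hP (hP s hs)]
    exact (hasDerivAt_closedForm ν k c z P s (hne s hs)
      (hz s hs)).hasDerivWithinAt.derivWithin (huniq s hs)
end
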